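/- arXiv:2501.03869 — 2 statements merged into one kernel-verified Lean document; each statement's English description precedes it below -/
import Mathlib

section
/- Let G51 be the 16×16 symmetric integer matrix with rows [4,-2,0,1,2,0,2,2,-2,-1,0,-2,-2,-1,-2,-2]; [-2,4,1,-1,0,1,-2,-2,0,-1,-1,2,2,-1,0,0]; [0,1,4,1,0,2,-1,-1,1,1,1,-1,1,1,-1,-1]; [1,-1,1,4,1,2,1,-1,1,1,-1,0,-2,-1,-2,1]; [2,0,0,1,4,1,2,1,-2,0,-2,-1,-2,-2,-1,-1]; [0,1,2,2,1,4,0,-2,0,0,0,0,0,-1,-2,0]; [2,-2,-1,1,2,0,4,2,-2,1,0,-1,-2,0,-1,-1]; [2,-2,-1,-1,1,-2,2,4,-2,0,0,-2,-1,1,0,-2]; [-2,0,1,1,-2,0,-2,-2,4,1,0,1,1,1,1,2]; [-1,-1,1,1,0,0,1,0,1,4,0,-1,0,1,1,1]; [0,-1,1,-1,-2,0,0,0,0,0,4,-1,1,2,0,-1]; [-2,2,-1,0,-1,0,-1,-2,1,-1,-1,4,1,-1,0,1]; [-2,2,1,-2,-2,0,-2,-1,1,0,1,1,4,1,1,0];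 [-1,-1,1,-1,-2,-1,0,1,1,1,2,-1,1,4,1,0]; [-2,0,-1,-2,-1,-2,-1,0,1,1,0,0,1,1,4,1]; [-2,0,-1,1,-1,0,-1,-2,2,1,-1,1,0,0,1,4]. Then G51 is positive definite, the set S = {v ∈ ℤ^16 : vᵀ·G51·v = 4} is finite with exactly 2640 elements, and the set {(1,v) : v ∈ S} ⊆ ℤ × ℤ^16 generates ℤ × ℤ^16 as a ℤ-module. -/
/-!
Completing squares one coordinate at a time (the `LDLᵀ` decomposition of `G51`, with denominators
cleared) gives an identity `M * vᵀ G51 v = ∑ cᵢ (pᵢ vᵢ + ∑_{j > i} lᵢⱼ vⱼ)²` with integers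
`cᵢ, pᵢ > 0` (`cost_coords`). Since the linear forms are triangular with nonzero diagonal, the form
is positive definite (`cost_pos`).

The same identity drives a Fincke–Pohst enumeration of the vectors of square `4`: choosing
`v₁₅, v₁₄, …, v₀` in turn, the part of the sum already determined never exceeds `4 * M`. As
`4 * M < 9 cᵢ pᵢ²`, each new coordinate is within distance `3` of the real centre of its square, so
only six values have to be tried. The enumeration is complete and free of repetitions
(`mem_enum`, `nodup_enum`), so the number of solutions is the length of its output, which the kernel
evaluates to `2640` (`count_rows`) in a tree of a few tens of thousands of nodes.

For generation, the basis vectors `eᵢ` and `e₀ + e₁` all have square `4` (as `G51₀₁ = -2`).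
Hence `(0, e₁) = (1, e₀ + e₁) - (1, e₀)`, so `(1, 0) = (1, e₁) - (0, e₁)`, and finally
`(0, eᵢ) = (1, eᵢ) - (1, 0)` are in the span.
-/

open Matrix

def G51 : Matrix (Fin 16) (Fin 16) ℤ :=
  !![4, -2, 0, 1, 2, 0, 2, 2, -2, -1, 0, -2, -2, -1, -2, -2;
    -2, 4, 1, -1, 0, 1, -2, -2, 0, -1, -1, 2, 2, -1, 0, 0;
    0, 1, 4, 1, 0, 2, -1, -1, 1, 1, 1, -1, 1, 1, -1, -1;
    1, -1, 1, 4, 1, 2, 1, -1, 1, 1, -1, 0, -2, -1, -2, 1;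
    2, 0, 0, 1, 4, 1, 2, 1, -2, 0, -2, -1, -2, -2, -1, -1;
    0, 1, 2, 2, 1, 4, 0, -2, 0, 0, 0, 0, 0, -1, -2, 0;
    2, -2, -1, 1, 2, 0, 4, 2, -2, 1, 0, -1, -2, 0, -1, -1;
    2, -2, -1, -1, 1, -2, 2, 4, -2, 0, 0, -2, -1, 1, 0, -2;
    -2, 0, 1, 1, -2, 0, -2, -2, 4, 1, 0, 1, 1, 1, 1, 2;
    -1, -1, 1, 1, 0, 0, 1, 0, 1, 4, 0, -1, 0, 1, 1, 1;
    0, -1, 1, -1, -2, 0, 0, 0, 0, 0, 4, -1, 1, 2, 0, -1;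
    -2, 2, -1, 0, -1, 0, -1, -2, 1, -1, -1, 4, 1, -1, 0, 1;
    -2, 2, 1, -2, -2, 0, -2, -1, 1, 0, 1, 1, 4, 1, 1, 0;
    -1, -1, 1, -1, -2, -1, 0, 1, 1, 1, 2, -1, 1, 4, 1, 0;
    -2, 0, -1, -2, -1, -2, -1, 0, 1, 1, 0, 0, 1, 1, 4, 1;
    -2, 0, -1, 1, -1, 0, -1, -2, 2, 1, -1, 1, 0, 0, 1, 4]

/-! ### Sums of squares of triangular linear forms -/

/-- Dot product of two lists, truncated to the shorter one. -/
def listDot : List ℤ → List ℤ → ℤ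
  | a :: as, b :: bs => a * b + listDot as bs
  | _, _ => 0

/-- A weighted sum of squares of triangular linear forms. An entry `(c, p, l)` contributes
`c * (p * y + l · acc)²`, where `y` is the next entry of the third argument and `acc` lists the
coordinates already read, most recent first. -/
def cost : List (ℤ × ℤ × List ℤ) → List ℤ → List ℤ → ℤ
  | (c, p, l) :: rs, acc, y :: ys =>
      c * ((p * y + listDot l acc) * (p * y + listDot l acc)) + cost rs (y :: acc) ys
  | _, _, _ => 0

theorem cost_nonneg (rs : List (ℤ × ℤ × List ℤ)) (h : ∀ r ∈ rs, 0 < r.1) (acc ys : List ℤ) :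
    0 ≤ cost rs acc ys := by
  induction rs generalizing acc ys with
  | nil => simp [cost]
  | cons r rs ih =>
    obtain ⟨c, p, l⟩ := r
    cases ys with
    | nil => simp [cost]
    | cons y ys =>
      have hc : 0 < c := h (c, p, l) (by simp)
      have := ih (fun r hr => h r (by simp [hr])) (y :: acc) ys
      have := mul_nonneg hc.le (mul_self_nonneg (p * y + listDot l acc))
      simp only [cost]
      linarith

theorem listDot_eq_zero (l acc : List ℤ) (h : ∀ a ∈ acc, a = 0) : listDot l acc = 0 := by
  induction l generalizing acc with
  | nil => simp [listDot]
  | cons b l ih =>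
    cases acc with
    | nil => simp [listDot]
    | cons a acc => simp [listDot, h a (by simp), ih acc (fun a ha => h a (by simp [ha]))]

/-- The first nonzero coordinate read already makes its own square positive. -/
theorem cost_pos (rs : List (ℤ × ℤ × List ℤ)) (h : ∀ r ∈ rs, 0 < r.1 ∧ 0 < r.2.1)
    (acc ys : List ℤ) (hlen : ys.length = rs.length) (hacc : ∀ a ∈ acc, a = 0)
    (hys : ∃ y ∈ ys, y ≠ 0) : 0 < cost rs acc ys := by
  induction rs generalizing acc ys with
  | nil => simp_all
  | cons r rs ih =>
    obtain ⟨c, p, l⟩ := r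
    cases ys with
    | nil => simp at hlen
    | cons y ys =>
      obtain ⟨hc, hp⟩ : 0 < c ∧ 0 < p := h (c, p, l) (by simp)
      have h' : ∀ r ∈ rs, 0 < r.1 ∧ 0 < r.2.1 := fun r hr => h r (by simp [hr])
      simp only [cost, listDot_eq_zero l acc hacc, add_zero]
      by_cases hy : y = 0
      · subst hy
        have := ih h' (0 :: acc) ys (by simpa using hlen) (by simpa using hacc) (by simpa using hys)
        simpa using this
      · have := cost_nonneg rs (fun r hr => (h' r hr).1) (y :: acc) ys
        have := mul_pos hc (mul_self_pos.2 (mul_ne_zero hp.ne' hy))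
        linarith

/-! ### Enumeration of the solutions -/

/-- Offsets from `⌊-s / p⌋` of the values tried for a coordinate. -/
def offsets : List ℤ := [-2, -1, 0, 1, 2, 3]

/-- All `ys` with `cost rs acc ys = R`, provided that `R < 9 * c * p²` for all `(c, p, l)`
in `rs`. -/
def enum : List (ℤ × ℤ × List ℤ) → List ℤ → ℤ → List (List ℤ)
  | [], _, R => if R = 0 then [[]] else []
  | (c, p, l) :: rs, acc, R =>
      offsets.flatMap fun k =>
        let x := -listDot l acc / p + k
        let R' := R - c * ((p * x + listDot l acc) * (p * x + listDot l acc))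
        if 0 ≤ R' then (enum rs (x :: acc) R').map (x :: ·) else []

/-- An integer `x` with `|p x + s| < 3 p` is one of the six candidates. -/
theorem offset_mem {p s x : ℤ} (hp : 0 < p)
    (h : (p * x + s) * (p * x + s) < 9 * (p * p)) : x - -s / p ∈ offsets := by
  obtain ⟨h1, h2⟩ := abs_lt_of_sq_lt_sq' (a := p * x + s) (b := 3 * p) (by nlinarith) (by linarith)
  have e := Int.mul_ediv_add_emod (-s) p
  have m0 := Int.emod_nonneg (-s) hp.ne'
  have m1 := Int.emod_lt_of_pos (-s) hp
  set q := -s / p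
  have u : x - q < 4 := by
    by_contra! hk
    nlinarith
  have w : -3 < x - q := by
    by_contra! hk
    nlinarith
  simp only [offsets, List.mem_cons, List.not_mem_nil, or_false]
  omega

theorem mem_enum (B : ℤ) (rs : List (ℤ × ℤ × List ℤ))
    (h : ∀ r ∈ rs, 0 < r.1 ∧ 0 < r.2.1 ∧ B < 9 * (r.1 * (r.2.1 * r.2.1)))
    (acc : List ℤ) (R : ℤ) (hR : R ≤ B) (ys : List ℤ) :
    ys ∈ enum rs acc R ↔ ys.length = rs.length ∧ cost rs acc ys = R := by
  induction rs generalizing acc R ys with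
  | nil =>
    by_cases h0 : R = 0
    · cases ys <;> simp [enum, cost, h0]
    · simp [enum, cost, h0, Ne.symm h0]
  | cons r rs ih =>
    obtain ⟨c, p, l⟩ := r
    obtain ⟨hc, hp, hB⟩ : 0 < c ∧ 0 < p ∧ B < 9 * (c * (p * p)) := h (c, p, l) (by simp)
    have h' : ∀ r ∈ rs, 0 < r.1 ∧ 0 < r.2.1 ∧ B < 9 * (r.1 * (r.2.1 * r.2.1)) :=
      fun r hr => h r (by simp [hr])
    cases ys with
    | nil =>
      simp only [enum, List.mem_flatMap, List.length_nil, List.length_cons]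
      constructor
      · rintro ⟨k, -, hk⟩
        split_ifs at hk <;> simp at hk
      · rintro ⟨hk, -⟩
        omega
    | cons y ys =>
      set s := listDot l acc with hs
      have hsq := mul_nonneg hc.le (mul_self_nonneg (p * y + s))
      have key : ys ∈ enum rs (y :: acc) (R - c * ((p * y + s) * (p * y + s))) ↔
          ys.length = rs.length ∧
            cost rs (y :: acc) ys = R - c * ((p * y + s) * (p * y + s)) :=
        ih h' _ _ (by linarith) _
      simp only [enum, List.mem_flatMap, List.length_cons, cost, ← hs]
      constructor
      · rintro ⟨k, -, hk⟩
        split_ifs at hk with h0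
        · simp only [List.mem_map, List.cons.injEq] at hk
          obtain ⟨zs, hz, rfl, rfl⟩ := hk
          have := key.1 hz
          exact ⟨by omega, by linarith⟩
        · simp at hk
      · rintro ⟨hl, hcost⟩
        have hn := cost_nonneg rs (fun r hr => (h' r hr).1) (y :: acc) ys
        have hmem : y - -s / p ∈ offsets := by
          apply offset_mem hp
          have : c * ((p * y + s) * (p * y + s)) < c * (9 * (p * p)) := by linarith
          exact lt_of_mul_lt_mul_left this hc.le
        refine ⟨y - -s / p, hmem, ?_⟩
        rw [add_sub_cancel, if_pos (by linarith)]
        exact List.mem_map.2 ⟨ys, key.2 ⟨by omega, by linarith⟩, rfl⟩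

theorem nodup_enum (rs : List (ℤ × ℤ × List ℤ)) (acc : List ℤ) (R : ℤ) :
    (enum rs acc R).Nodup := by
  induction rs generalizing acc R with
  | nil =>
    simp only [enum]
    split_ifs <;> simp
  | cons r rs ih =>
    obtain ⟨c, p, l⟩ := r
    simp only [enum]
    refine List.nodup_flatMap.2 ⟨fun k _ => ?_, ?_⟩
    · split_ifs
      · exact (ih _ _).map (List.cons_injective)
      · exact List.nodup_nil
    · have hoff : offsets.Nodup := by decide
      refine hoff.imp fun {a b} hab ys h1 h2 => hab ?_
      beta_reduce at h1 h2
      split_ifs at h1 h2 <;> simp only [List.mem_map, List.not_mem_nil] at h1 h2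
      obtain ⟨z1, -, rfl⟩ := h1
      obtain ⟨z2, -, e⟩ := h2
      have := (List.cons.inj e).1
      linarith

/-- `force z f` is `f z`; the case distinction makes kernel reduction bring `z` to a literal before
it is substituted into `f`. -/
def force {α : Type} (z : ℤ) (f : ℤ → α) : α :=
  match z with
  | Int.ofNat 0 => f 0
  | Int.ofNat (n + 1) => f (Int.ofNat (n + 1))
  | Int.negSucc 0 => f (-1)
  | Int.negSucc (n + 1) => f (Int.negSucc (n + 1))

theorem force_eq {α : Type} (z : ℤ) (f : ℤ → α) : force z f = f z := by
  unfold force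
  split <;> rfl

/-- `g (R - c * m²)` if the argument is a natural number, and `0` otherwise. -/
def branch (c m R : ℕ) (g : ℕ → ℕ) : ℕ :=
  match R + 1 - c * (m * m) with
  | 0 => 0
  | R' + 1 => g R'

theorem branch_eq {c t : ℤ} {m : ℕ} (hc : 0 < c) (ht : t * t = m * m) (R : ℕ)
    {L : ℤ → List (List ℤ)} {g : ℕ → ℕ} (hg : ∀ R' : ℕ, (L R').length = g R') (x : ℤ) :
    (if 0 ≤ (R : ℤ) - c * (t * t) then (L (R - c * (t * t))).map (x :: ·) else []).length =
      branch c.toNat m R g := by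
  lift c to ℕ using hc.le
  rw [ht, Int.toNat_natCast, branch]
  by_cases h : c * (m * m) ≤ R
  · have e : (R : ℤ) - c * (m * m) = ((R - c * (m * m) : ℕ) : ℤ) := by
      push_cast [Nat.cast_sub h]
      rfl
    rw [e, if_pos (Int.natCast_nonneg _), List.length_map, hg, Nat.sub_add_comm h]
  · have h' : ¬ (0 : ℤ) ≤ R - c * (m * m) := by
      rw [not_le, sub_neg]
      exact_mod_cast not_le.1 h
    rw [if_neg h', Nat.sub_eq_zero_of_le (by omega), List.length_nil]

/-- The length of `enum`, in a form suited to evaluation by the kernel: with `q = ⌊-s / p⌋` and `r`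
the remainder, `|p (q + k) + s| = |p k - r|` is written as a natural number for each offset `k`. -/
def count : List (ℤ × ℤ × List ℤ) → List ℤ → ℕ → ℕ
  | [], _, R => if R = 0 then 1 else 0
  | (c, p, l) :: rs, acc, R =>
      force (-listDot l acc) fun s =>
      force (s / p) fun q =>
      force (s % p) fun r =>
        branch c.toNat (r.toNat + 2 * p.toNat) R
          (fun R' => force (q + -2) fun x => count rs (x :: acc) R') +
        (branch c.toNat (r.toNat + p.toNat) R
          (fun R' => force (q + -1) fun x => count rs (x :: acc) R') +
        (branch c.toNat r.toNat R (fun R' => count rs (q :: acc) R') +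
        (branch c.toNat (p.toNat - r.toNat) R
          (fun R' => force (q + 1) fun x => count rs (x :: acc) R') +
        (branch c.toNat (2 * p.toNat - r.toNat) R
          (fun R' => force (q + 2) fun x => count rs (x :: acc) R') +
        branch c.toNat (3 * p.toNat - r.toNat) R
          (fun R' => force (q + 3) fun x => count rs (x :: acc) R')))))

theorem length_enum (rs : List (ℤ × ℤ × List ℤ)) (h : ∀ r ∈ rs, 0 < r.1 ∧ 0 < r.2.1)
    (acc : List ℤ) (R : ℕ) : (enum rs acc R).length = count rs acc R := by
  induction rs generalizing acc R with
  | nil =>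
    simp only [enum, count, Nat.cast_eq_zero]
    split_ifs <;> rfl
  | cons r rs ih =>
    obtain ⟨c, p, l⟩ := r
    obtain ⟨hc, hp⟩ : 0 < c ∧ 0 < p := h (c, p, l) (by simp)
    have ih' := ih fun r hr => h r (by simp [hr])
    simp only [enum, count, force_eq, List.length_flatMap, offsets, List.map_cons, List.map_nil,
      List.sum_cons, List.sum_nil]
    have e := Int.mul_ediv_add_emod (-listDot l acc) p
    have m0 := Int.emod_nonneg (-listDot l acc) hp.ne'
    have m1 := Int.emod_lt_of_pos (-listDot l acc) hp
    set s := listDot l acc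
    set q := -s / p
    set r := -s % p
    have hs : s = -(p * q + r) := by linarith
    clear_value q r s
    subst hs
    lift r to ℕ using m0
    lift p to ℕ using hp.le
    have hrp : r < p := by exact_mod_cast m1
    simp only [Int.toNat_natCast]
    congr 1
    · exact branch_eq hc (by push_cast; ring) R (fun R' => ih' _ R') _
    congr 1
    · exact branch_eq hc (by push_cast; ring) R (fun R' => ih' _ R') _
    congr 1
    · simpa only [add_zero] using
        branch_eq hc (t := p * (q + 0) + -(p * q + r)) (by ring) R (fun R' => ih' (q :: acc) R') q
    congr 1
    · exact branch_eq hc (by push_cast [hrp.le]; ring) R (fun R' => ih' _ R') _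
    congr 1
    · exact branch_eq hc (by push_cast [show r ≤ 2 * p by omega]; ring) R (fun R' => ih' _ R') _
    rw [add_zero]
    exact branch_eq hc (by push_cast [show r ≤ 3 * p by omega]; ring) R (fun R' => ih' _ R') _

/-! ### The form `G51` -/

/-- The `LDLᵀ` decomposition of `G51` with denominators cleared, last coordinate first: the entry
`(c, p, l)` for the coordinate `i` stands for `c * (p * v i + ∑ j > i, l j * v j)²`. -/
def rows : List (ℤ × ℤ × List ℤ) :=
  [(1477012336733382288840, 1, []),
   (671369243969719222200, 2, [-1]),
   (16784231099242980555, 11, [-4, 2]),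
   (1693821487079566845, 40, [7, 12, 18]),
   (287088387640604550, 109, [32, -38, -34, -51]),
   (11195933543050410, 472, [-145, 96, -114, -102, -153]),
   (2995737319909180, 1118, [-472, -414, 463, -445, 102, 153]),
   (933974992654340, 1764, [-530, -704, 414, 713, 151, -102, -153]),
   (1200824990555580, 1793, [-648, -281, -583, -518, 104, 530, -548, -822]),
   (2994546881872260, 1372, [403, -604, 549, 475, 182, 80, 566, -316, -474]),
   (11540781803170620, 719, [58, -267, -210, -221, 258, -51, 104, -127, -267, -41]),
   (57226359423997764, 356, [63, 166, 89, -110, 147, -170, -103, -132, -75, 89, -13]),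
   (463013271703254636, 145, [34, 72, 24, -64, 40, 23, -70, 48, -68, -65, -64, 68]),
   (22378974798990640740, 22, [7, -2, 10, -4, -4, 8, 9, 8, -8, 4, 9, -4, -4]),
   (246168722788897048140, 6, [2, -1, 2, 2, -2, -2, -2, -3, -2, 2, 2, -3, -2, -2]),
   (738506168366691144420, 4, [-2, 0, 1, 2, 0, 2, 2, -2, -1, 0, -2, -2, -1, -2, -2])]

/-- The common denominator cleared in `rows`. -/
def scale : ℤ := 2954024673466764577680

/-- The coordinates of a vector in the order in which `rows` reads them. -/
def coords (v : Fin 16 → ℤ) : List ℤ :=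
  [v 15, v 14, v 13, v 12, v 11, v 10, v 9, v 8, v 7, v 6, v 5, v 4, v 3, v 2, v 1, v 0]

theorem coords_injective : Function.Injective coords := by
  intro v w h
  simp only [coords, List.cons.injEq, and_true] at h
  funext i
  fin_cases i <;> simp_all

theorem exists_coords_eq (ys : List ℤ) (h : ys.length = 16) : ∃ v, coords v = ys := by
  refine ⟨fun i => ys[15 - (i : ℕ)]'(by omega), ?_⟩
  refine List.ext_getElem (by simp [coords, h]) fun k h1 h2 => ?_
  have hk : k < 16 := h ▸ h2
  interval_cases k <;> rfl

theorem cost_coords (v : Fin 16 → ℤ) :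
    cost rows [] (coords v) = scale * (v ⬝ᵥ G51.mulVec v) := by
  simp only [cost, rows, coords, listDot, scale, dotProduct, Matrix.mulVec, G51, Matrix.of_apply,
    Fin.sum_univ_succ, Fin.sum_univ_zero]
  simp [Matrix.cons_val]
  ring

theorem rows_bounds : ∀ r ∈ rows,
    0 < r.1 ∧ 0 < r.2.1 ∧ 4 * scale < 9 * (r.1 * (r.2.1 * r.2.1)) := by
  decide +kernel

theorem count_rows : count rows [] (4 * scale.toNat) = 2640 := by
  decide +kernel

theorem G51_pos (v : Fin 16 → ℤ) (hv : v ≠ 0) : 0 < v ⬝ᵥ G51.mulVec v := by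
  have hs : 0 < scale := by decide
  refine pos_of_mul_pos_right (a := scale) ?_ hs.le
  rw [← cost_coords]
  refine cost_pos rows (fun r hr => ⟨(rows_bounds r hr).1, (rows_bounds r hr).2.1⟩) [] _ rfl
    (by simp) ?_
  by_contra! h
  refine hv (funext fun i => h _ ?_)
  fin_cases i <;> simp [coords]

/-- Reading off coordinates identifies the vectors of square `4` with the output of `enum`. -/
theorem image_coords : coords '' {v : Fin 16 → ℤ | v ⬝ᵥ G51.mulVec v = 4} =
    ((enum rows [] (4 * scale)).toFinset : Set (List ℤ)) := by
  have hs : scale ≠ 0 := by decide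
  ext ys
  simp only [Set.mem_image, Set.mem_ofPred_eq, List.coe_toFinset,
    mem_enum _ rows rows_bounds [] _ le_rfl]
  constructor
  · rintro ⟨v, hv, rfl⟩
    exact ⟨rfl, by rw [cost_coords, hv, mul_comm]⟩
  · rintro ⟨hl, hc⟩
    obtain ⟨v, rfl⟩ := exists_coords_eq ys hl
    refine ⟨v, mul_left_cancel₀ hs ?_, rfl⟩
    rw [← cost_coords, hc, mul_comm]

theorem G51_single (i : Fin 16) :
    (Pi.single i 1 : Fin 16 → ℤ) ⬝ᵥ G51.mulVec (Pi.single i 1) = 4 := by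
  rw [Matrix.mulVec_single_one, single_one_dotProduct]
  fin_cases i <;> rfl

theorem G51_single_add :
    (Pi.single 0 1 + Pi.single 1 1 : Fin 16 → ℤ) ⬝ᵥ
      G51.mulVec (Pi.single 0 1 + Pi.single 1 1) = 4 := by
  simp only [Matrix.mulVec_add, Matrix.mulVec_single_one, add_dotProduct, dotProduct_add,
    single_one_dotProduct]
  rfl

theorem span_eq_top : Submodule.span ℤ {p : ℤ × (Fin 16 → ℤ) |
    p.1 = 1 ∧ p.2 ⬝ᵥ G51.mulVec p.2 = 4} = ⊤ := by
  set W := Submodule.span ℤ {p : ℤ × (Fin 16 → ℤ) | p.1 = 1 ∧ p.2 ⬝ᵥ G51.mulVec p.2 = 4}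
  have h1 (i : Fin 16) : ((1, Pi.single i 1) : ℤ × (Fin 16 → ℤ)) ∈ W :=
    Submodule.subset_span ⟨rfl, G51_single i⟩
  have h2 : ((1, Pi.single 0 1 + Pi.single 1 1) : ℤ × (Fin 16 → ℤ)) ∈ W :=
    Submodule.subset_span ⟨rfl, G51_single_add⟩
  have h3 : ((1, 0) : ℤ × (Fin 16 → ℤ)) ∈ W := by
    have := W.sub_mem (h1 1) (W.sub_mem h2 (h1 0))
    simpa using this
  have h4 (i : Fin 16) : ((0, Pi.single i 1) : ℤ × (Fin 16 → ℤ)) ∈ W := by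
    simpa using W.sub_mem (h1 i) h3
  refine eq_top_iff.2 fun ⟨a, v⟩ _ => ?_
  have e : ((a, v) : ℤ × (Fin 16 → ℤ)) =
      a • (1, 0) + ∑ i, v i • ((0, Pi.single i 1) : ℤ × (Fin 16 → ℤ)) := by
    refine Prod.ext ?_ ?_
    · simp [Prod.fst_sum]
    · simp only [Prod.snd_add, Prod.smul_snd, Prod.snd_sum, smul_zero, zero_add]
      exact pi_eq_sum_univ' v
  rw [e]
  exact W.add_mem (W.smul_mem _ h3) (W.sum_mem fun i _ => W.smul_mem _ (h4 i))

/-- `G51` is positive definite; there are exactly 2640 vectors of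
square 4 (corresponding to the classes of cubic scrolls via `η + v`), and the
vectors `(1, v)` for `v` of square 4 generate the full lattice
`⟨η⟩ ⊕ A_prim(X) = ℤ × ℤ^16`. -/
theorem stmt_9 :
    (∀ v : Fin 16 → ℤ, v ≠ 0 → 0 < v ⬝ᵥ G51.mulVec v) ∧
    {v : Fin 16 → ℤ | v ⬝ᵥ G51.mulVec v = 4}.Finite ∧
    {v : Fin 16 → ℤ | v ⬝ᵥ G51.mulVec v = 4}.ncard = 2640 ∧
    Submodule.span ℤ {p : ℤ × (Fin 16 → ℤ) |
      p.1 = 1 ∧ p.2 ⬝ᵥ G51.mulVec p.2 = 4} = ⊤ := by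
  refine ⟨G51_pos, ?_, ?_, span_eq_top⟩
  · refine Set.Finite.of_finite_image ?_ coords_injective.injOn
    rw [image_coords]
    exact Finset.finite_toSet _
  · rw [← Set.ncard_image_of_injective _ coords_injective, image_coords, Set.ncard_coe_finset,
      List.toFinset_card_of_nodup (nodup_enum _ _ _), show 4 * scale = ((4 * scale.toNat : ℕ) : ℤ) by decide,
      length_enum rows (fun r hr => ⟨(rows_bounds r hr).1, (rows_bounds r hr).2.1⟩), count_rows]
end

section
/- Let G111 be the 20×20 symmetric integer matrix with rows [4,-1,2,-1,0,-1,2,2,1,2,2,-1,2,-1,2,2,-2,2,-1,-2]; [-1,4,0,0,0,-1,-1,-2,-2,-2,-2,-1,-2,2,-2,-1,2,0,-1,1]; [2,0,4,-1,1,0,2,0,1,1,2,-2,1,-1,0,1,-1,2,-1,-1]; [-1,0,-1,4,1,1,0,0,-2,-2,-1,1,1,-1,-2,-2,2,-1,2,2]; [0,0,1,1,4,2,2,1,1,-1,0,-1,1,-1,0,-2,0,-1,2,2]; [-1,-1,0,1,2,4,0,0,1,0,0,1,0,0,-1,-2,-1,0,1,1]; [2,-1,2,0,2,0,4,2,1,1,2,-1,2,-1,1,0,-1,1,0,0];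 [2,-2,0,0,1,0,2,4,2,1,2,0,2,-2,2,1,-1,0,1,-1]; [1,-2,1,-2,1,1,1,2,4,2,2,0,1,-1,2,1,-2,0,0,-1]; [2,-2,1,-2,-1,0,1,1,2,4,2,0,1,0,2,2,-2,1,-1,-2]; [2,-2,2,-1,0,0,2,2,2,2,4,-1,2,-2,1,2,-2,2,0,-2]; [-1,-1,-2,1,-1,1,-1,0,0,0,-1,4,-1,1,0,0,0,-1,0,1]; [2,-2,1,1,1,0,2,2,1,1,2,-1,4,-2,1,0,-1,1,1,-1]; [-1,2,-1,-1,-1,0,-1,-2,-1,0,-2,1,-2,4,-1,-1,0,0,-2,0]; [2,-2,0,-2,0,-1,1,2,2,2,1,0,1,-1,4,2,-2,0,0,-1]; [2,-1,1,-2,-2,-2,0,1,1,2,2,0,0,-1,2,4,-1,1,-1,-2]; [-2,2,-1,2,0,-1,-1,-1,-2,-2,-2,0,-1,0,-2,-1,4,-2,1,2]; [2,0,2,-1,-1,0,1,0,0,1,2,-1,1,0,0,1,-2,4,-2,-2]; [-1,-1,-1,2,2,1,0,1,0,-1,0,0,1,-2,0,-1,1,-2,4,2]; [-2,1,-1,2,2,1,0,-1,-1,-2,-2,1,-1,0,-1,-2,2,-2,2,4].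 Then the cokernel ℤ^20/(G111·ℤ^20) of the ℤ-linear map given by G111 is isomorphic, as an abelian group, to (ℤ/11ℤ)^2. -/
/-! Write `G = G111`. The inverse of `G` is `H / 11` with `H` integral, so an integer vector `x` lies
in the image of `G` exactly when `H x ≡ 0` modulo `11`. Modulo `11` the matrix `H` has rank two;
factor it as `H = L K + 11 M` with `K` a `2 × 20` matrix whose rows are the reduced row echelon basis
of the row space of `H` modulo `11`. The discriminant group is then identified with `(ℤ/11ℤ)²` by
`x ↦ K x mod 11`.

Integer matrices certify this without mentioning `H`:
* `K E = 1` shows that `x ↦ K x mod 11` is surjective;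
* `K G = 11 Q` shows that the map kills the image of `G`;
* `G M + P K = 1` and `G L = 11 P` show that its kernel is no larger: if `K x = 11 z`, then
  `x = G M x + P K x = G (M x) + 11 P z = G (M x + L z)`. -/

open Matrix

def G111 : Matrix (Fin 20) (Fin 20) ℤ :=
  !![4, -1, 2, -1, 0, -1, 2, 2, 1, 2, 2, -1, 2, -1, 2, 2, -2, 2, -1, -2;
    -1, 4, 0, 0, 0, -1, -1, -2, -2, -2, -2, -1, -2, 2, -2, -1, 2, 0, -1, 1;
    2, 0, 4, -1, 1, 0, 2, 0, 1, 1, 2, -2, 1, -1, 0, 1, -1, 2, -1, -1;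
    -1, 0, -1, 4, 1, 1, 0, 0, -2, -2, -1, 1, 1, -1, -2, -2, 2, -1, 2, 2;
    0, 0, 1, 1, 4, 2, 2, 1, 1, -1, 0, -1, 1, -1, 0, -2, 0, -1, 2, 2;
    -1, -1, 0, 1, 2, 4, 0, 0, 1, 0, 0, 1, 0, 0, -1, -2, -1, 0, 1, 1;
    2, -1, 2, 0, 2, 0, 4, 2, 1, 1, 2, -1, 2, -1, 1, 0, -1, 1, 0, 0;
    2, -2, 0, 0, 1, 0, 2, 4, 2, 1, 2, 0, 2, -2, 2, 1, -1, 0, 1, -1;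
    1, -2, 1, -2, 1, 1, 1, 2, 4, 2, 2, 0, 1, -1, 2, 1, -2, 0, 0, -1;
    2, -2, 1, -2, -1, 0, 1, 1, 2, 4, 2, 0, 1, 0, 2, 2, -2, 1, -1, -2;
    2, -2, 2, -1, 0, 0, 2, 2, 2, 2, 4, -1, 2, -2, 1, 2, -2, 2, 0, -2;
    -1, -1, -2, 1, -1, 1, -1, 0, 0, 0, -1, 4, -1, 1, 0, 0, 0, -1, 0, 1;
    2, -2, 1, 1, 1, 0, 2, 2, 1, 1, 2, -1, 4, -2, 1, 0, -1, 1, 1, -1;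
    -1, 2, -1, -1, -1, 0, -1, -2, -1, 0, -2, 1, -2, 4, -1, -1, 0, 0, -2, 0;
    2, -2, 0, -2, 0, -1, 1, 2, 2, 2, 1, 0, 1, -1, 4, 2, -2, 0, 0, -1;
    2, -1, 1, -2, -2, -2, 0, 1, 1, 2, 2, 0, 0, -1, 2, 4, -1, 1, -1, -2;
    -2, 2, -1, 2, 0, -1, -1, -1, -2, -2, -2, 0, -1, 0, -2, -1, 4, -2, 1, 2;
    2, 0, 2, -1, -1, 0, 1, 0, 0, 1, 2, -1, 1, 0, 0, 1, -2, 4, -2, -2;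
    -1, -1, -1, 2, 2, 1, 0, 1, 0, -1, 0, 0, 1, -2, 0, -1, 1, -2, 4, 2;
    -2, 1, -1, 2, 2, 1, 0, -1, -1, -2, -2, 1, -1, 0, -1, -2, 2, -2, 2, 4]

/-- Basis of the row space of `11 G⁻¹` modulo `11`, in reduced row echelon form; reduction modulo
`11` of `x ↦ K x` is the isomorphism on the discriminant group. -/
def matK : Matrix (Fin 2) (Fin 20) ℤ :=
  !![1, 0, -5, 3, 0, 3, 5, -4, -4, -3, 1, 1, 2, 1, -1, -5, 3, 3, 1, 2;
    0, 1, -1, 5, 2, -2, -4, 2, 2, 0, -3, -1, 2, 3, 0, -2, 4, -5, -1, 0]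

/-- Right inverse of `matK`, selecting its two pivot columns. -/
def matE : Matrix (Fin 20) (Fin 2) ℤ :=
  !![1, 0;
    0, 1;
    0, 0;
    0, 0;
    0, 0;
    0, 0;
    0, 0;
    0, 0;
    0, 0;
    0, 0;
    0, 0;
    0, 0;
    0, 0;
    0, 0;
    0, 0;
    0, 0;
    0, 0;
    0, 0;
    0, 0;
    0, 0]

/-- The pivot columns of `11 G⁻¹`, with entries reduced modulo `11`. -/
def matL : Matrix (Fin 20) (Fin 2) ℤ :=
  !![-5, -1;
    -1, 1;
    4, 4;
    2, 2;
    -2, 2;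
    -2, -5;
    1, 2;
    -4, -5;
    -4, -5;
    4, 3;
    -2, -4;
    -4, -2;
    -1, 0;
    3, 2;
    5, 1;
    5, 3;
    3, 1;
    1, 3;
    -4, -2;
    1, -2]

/-- The quotient `(11 G⁻¹ - L K) / 11`. -/
def matM : Matrix (Fin 20) (Fin 20) ℤ :=
  !![3, 0, -3, 1, -2, 3, 3, -3, -1, -3, 1, 0, 1, 1, 0, -3, 3, 0, 1, 1;
    0, 3, 0, 0, -4, 3, 3, -1, 0, -1, 0, 0, 1, -1, 1, 0, -1, -1, 1, 0;
    -1, 0, 4, -3, -2, 0, -1, 2, 0, 1, 1, 0, -1, -1, 1, 2, -3, 0, 0, 0;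
    -1, 0, 1, 2, 0, -1, 0, 0, 2, 1, 0, -1, -2, 0, 1, 2, -2, 1, 0, -1;
    -2, -4, -2, 0, 12, -7, -4, 0, -3, 4, 1, 3, -2, -1, -3, -1, 0, 6, -2, -1;
    2, 3, -1, 2, -7, 6, 3, -1, 1, -4, -1, -2, 3, 2, 2, -1, 3, -5, 1, 1;
    1, 2, 0, -1, -6, 4, 5, -2, 2, -2, -1, -1, 0, -1, 1, 2, -1, -1, 2, -1;
    -1, 0, -1, 3, 2, -1, -2, 2, -2, 0, -1, 0, 2, 2, -1, -3, 2, -1, -1, 2;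
    1, 1, -3, 5, -1, 1, 2, -2, 2, -2, -2, -1, 1, 2, 0, -2, 3, -1, 1, 0;
    -2, -1, 2, -2, 4, -4, -3, 2, 0, 4, 0, 1, -2, -2, -1, 2, -3, 2, -1, -1;
    1, 0, -1, 2, 1, 0, -2, 0, -1, -1, 2, 0, 1, 2, 1, -3, 3, -2, -1, 1;
    0, 0, -2, 1, 3, -1, 0, -1, -2, 0, 0, 2, 1, 0, -1, -3, 2, 1, 0, 0;
    0, 1, 0, -1, -2, 2, 1, 0, -1, -1, 0, 0, 2, 0, 0, 0, 0, -1, 0, 1;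
    0, -1, 2, -1, -1, 0, -1, 1, 1, 0, 1, -1, -1, 1, 1, 2, -1, 0, 0, 0;
    0, 1, 3, -1, -3, 1, -1, 1, 2, 0, 1, -1, -1, 0, 3, 2, -1, -2, 0, -1;
    -1, 0, 2, -2, -1, 0, 0, 1, 2, 1, -1, -1, -1, -1, 0, 5, -3, 0, 0, -1;
    1, -1, 1, -2, 0, 0, -1, 0, 1, 0, 1, 0, -1, 0, 1, 1, 1, 0, 0, -1;
    -1, -2, 0, -1, 4, -3, -1, 0, 0, 2, 0, 1, -2, -1, -1, 1, -1, 4, 0, -1;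
    1, 1, -2, 2, -2, 2, 3, -2, 0, -2, -1, 0, 1, 1, 0, -2, 2, 0, 2, 0;
    0, 0, 1, 0, -1, 0, -2, 2, 0, 0, 0, -1, 1, 1, 0, 0, 0, -2, -1, 2]

/-- The quotient `G L / 11`. -/
def matP : Matrix (Fin 20) (Fin 2) ℤ :=
  !![0, 1;
    2, 3;
    1, 2;
    -2, -1;
    -3, -2;
    -3, -3;
    -1, 0;
    -3, -3;
    -2, -3;
    1, 0;
    -1, -1;
    -1, -2;
    -2, -1;
    2, 2;
    0, -1;
    2, 1;
    1, 1;
    1, 2;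
    -3, -3;
    -1, -1]

/-- The quotient `K G / 11`. -/
def matQ : Matrix (Fin 2) (Fin 20) ℤ :=
  !![-3, 2, -2, 5, 2, 2, 0, -2, -4, -4, -3, 1, 0, 1, -4, -5, 3, -1, 2, 4;
    -3, 2, -3, 3, 1, 0, -2, -1, -2, -3, -4, 1, -1, 1, -2, -3, 4, -4, 2, 3]

theorem matK_mul_matE : matK * matE = 1 := by decide +kernel

theorem matK_mul_G111 : matK * G111 = (11 : ℤ) • matQ := by decide +kernel

theorem G111_mul_matL : G111 * matL = (11 : ℤ) • matP := by decide +kernel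

theorem G111_mul_matM_add : G111 * matM + matP * matK = 1 := by decide +kernel

/-- The map `x ↦ K x mod 11`. -/
def discMap : (Fin 20 → ℤ) →+ (Fin 2 → ZMod 11) :=
  ((Int.castAddHom (ZMod 11)).compLeft (Fin 2)).comp matK.mulVecLin.toAddMonoidHom

theorem discMap_apply (x : Fin 20 → ℤ) (i : Fin 2) :
    discMap x i = (((matK *ᵥ x) i : ℤ) : ZMod 11) := rfl

theorem discMap_surjective : Function.Surjective discMap := by
  intro v
  choose w hw using fun i => ZMod.intCast_surjective (v i)
  refine ⟨matE *ᵥ w, funext fun i => ?_⟩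
  rw [discMap_apply, mulVec_mulVec, matK_mul_matE, one_mulVec, hw]

theorem ker_discMap : discMap.ker = (LinearMap.range G111.mulVecLin).toAddSubgroup := by
  ext x
  rw [AddMonoidHom.mem_ker, Submodule.mem_toAddSubgroup, LinearMap.mem_range]
  constructor
  · intro hx
    have h : ∀ i, ∃ z : ℤ, (matK *ᵥ x) i = 11 * z := fun i =>
      (ZMod.intCast_zmod_eq_zero_iff_dvd _ 11).1 (congrFun hx i)
    choose z hz using h
    have hK : matK *ᵥ x = (11 : ℤ) • z := funext hz
    refine ⟨matM *ᵥ x + matL *ᵥ z, ?_⟩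
    calc G111 *ᵥ (matM *ᵥ x + matL *ᵥ z)
        = (G111 * matM) *ᵥ x + matP *ᵥ (matK *ᵥ x) := by
          rw [mulVec_add, mulVec_mulVec, mulVec_mulVec, G111_mul_matL, hK, smul_mulVec,
            mulVec_smul]
      _ = x := by rw [mulVec_mulVec, ← add_mulVec, G111_mul_matM_add, one_mulVec]
  · rintro ⟨y, rfl⟩
    funext i
    rw [discMap_apply, mulVecLin_apply, mulVec_mulVec, matK_mul_G111, smul_mulVec]
    exact (ZMod.intCast_zmod_eq_zero_iff_dvd _ 11).2 ⟨_, rfl⟩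

/-- The discriminant group of the lattice with Gram matrix `G111`
(the primitive algebraic lattice of the cubic fourfold with symplectic automorphism
`φ₁₁¹`), i.e. the cokernel `ℤ²⁰/(G111·ℤ²⁰)`, is isomorphic to `(ℤ/11ℤ)²`. -/
theorem stmt_12 :
    Nonempty (((Fin 20 → ℤ) ⧸ LinearMap.range G111.mulVecLin) ≃+ (Fin 2 → ZMod 11)) := by
  exact ⟨(QuotientAddGroup.quotientAddEquivOfEq ker_discMap.symm).trans
    (QuotientAddGroup.quotientKerEquivOfSurjective discMap discMap_surjective)⟩
end
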